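/- arXiv:1709.08869 — 2 statements merged into one kernel-verified Lean document; each statement's English description precedes it below -/
import Mathlib

section
/- Let s = yxyzxz and t = yxzxyxz, let ξ be a monoid endomorphism of the free monoid F, let a, b ∈ F, and let (u, v) be either (s, t) or (t, s). Then: (i) if s = a · ξ(u) · b and the word w = a · ξ(v) · b is different from s, then w = t; (ii) if t = a · ξ(u) · b and the word w = a · ξ(v) · b is different from t, then w = s. -/
/-!
The words `s` and `t` are square-free. If `ξ` erases one of `x`, `y`, `z`, then `ξ s` and `ξ t`
contain squares which, by square-freeness, force `ξ` to erase all three letters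
(`erase_all_of_erase_one`); then `a * ξ v * b = a * ξ u * b`, which is excluded. Otherwise
`ξ x`, `ξ y`, `ξ z` are all nonempty, and since `s` and `t` have lengths `6` and `7`, comparing
lengths shows that the images are single letters. Comparing letters then leaves only `ξ` fixing
`x`, `y`, `z` with `a = b = 1`, in which case `a * ξ v * b` is the other word.
-/

/-- The free monoid over a countably infinite alphabet. -/
abbrev F : Type := FreeMonoid ℕ

/-- A congruence on the free monoid is fully invariant if it is stable
under every monoid endomorphism. -/
def IsFullyInvariant (c : Con F) : Prop :=
  ∀ f : F →* F, ∀ u v : F, c u v → c (f u) (f v)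

/-- The type of fully invariant congruences on `F`. -/
abbrev FICon : Type := {c : Con F // IsFullyInvariant c}

/-- The smallest fully invariant congruence containing a set of pairs of words. -/
def fiGen (S : Set (F × F)) : Con F :=
  sInf {c : Con F | IsFullyInvariant c ∧ ∀ p ∈ S, c p.1 p.2}

lemma fiGen_apply (S : Set (F × F)) (u v : F) :
    fiGen S u v ↔ ∀ c : Con F, (IsFullyInvariant c ∧ ∀ p ∈ S, c p.1 p.2) → c u v :=
  ⟨fun h c hc => h c hc, fun h c hc => h c hc⟩

lemma isFullyInvariant_fiGen (S : Set (F × F)) : IsFullyInvariant (fiGen S) := by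
  intro f u v h
  rw [fiGen_apply] at h ⊢
  exact fun c hc => hc.1 f u v (h c hc)

/-- The fully invariant closure of a congruence, as an element of `FICon`. -/
def fiCl (c : Con F) : FICon :=
  ⟨fiGen {p | c p.1 p.2}, isFullyInvariant_fiGen _⟩

lemma le_fiCl (c : Con F) : c ≤ (fiCl c).val := by
  refine le_sInf fun b hb => ?_
  rw [Con.le_def]
  exact fun {u v} huv => hb.2 (u, v) huv

lemma fiGC : GaloisConnection fiCl (Subtype.val : FICon → Con F) := by
  intro c d
  constructor
  · exact fun h => le_trans (le_fiCl c) h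
  · intro h
    have hle : (fiCl c).val ≤ d.val :=
      sInf_le ⟨d.2, fun p hp => (Con.le_def.mp h) hp⟩
    exact hle

/-- The Galois insertion between congruences and fully invariant congruences. -/
def fiGI : GaloisInsertion fiCl (Subtype.val : FICon → Con F) :=
  fiGC.toGaloisInsertion fun d => le_fiCl d.val

noncomputable instance : CompleteLattice FICon := fiGI.liftCompleteLattice

/-- The lattice of monoid varieties: the order dual of the lattice of fully
invariant congruences on the free monoid `F`. -/
abbrev MON : Type := FIConᵒᵈ

/-- The monoid variety given by the identity system `S`. -/
def gen (S : Set (F × F)) : MON :=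
  OrderDual.toDual ⟨fiGen S, isFullyInvariant_fiGen S⟩

/-- The fully invariant congruence (equational theory) of a monoid variety. -/
def theta (V : MON) : Con F := (OrderDual.ofDual V).val

/-- Fixed pairwise distinct letters. -/
def x : F := FreeMonoid.of 0
def y : F := FreeMonoid.of 1
def z : F := FreeMonoid.of 2
def r : F := FreeMonoid.of 3

/-- The content of a word: the set of letters occurring in it. -/
def con (w : F) : Set ℕ := {a | a ∈ FreeMonoid.toList w}

/-- The set of letters that are simple in a word (occur exactly once). -/
def simpleIn (w : F) : Set ℕ := {a | (FreeMonoid.toList w).count a = 1}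

/-- Neutral element of a lattice. -/
def IsNeutralElt {L : Type*} [Lattice L] (a : L) : Prop :=
  ∀ y z : L, (a ⊔ y) ⊓ (y ⊔ z) ⊓ (z ⊔ a) = (a ⊓ y) ⊔ (y ⊓ z) ⊔ (z ⊓ a)

/-- Costandard element of a lattice. -/
def IsCostandardElt {L : Type*} [Lattice L] (a : L) : Prop :=
  ∀ y z : L, (a ⊓ y) ⊔ z = (a ⊔ z) ⊓ (y ⊔ z)

/-- Codistributive element of a lattice. -/
def IsCodistributiveElt {L : Type*} [Lattice L] (a : L) : Prop :=
  ∀ y z : L, a ⊓ (y ⊔ z) = (a ⊓ y) ⊔ (a ⊓ z)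

/-- Modular element of a lattice. -/
def IsModularElt {L : Type*} [Lattice L] (a : L) : Prop :=
  ∀ y z : L, y ≤ z → (a ⊔ y) ⊓ z = (a ⊓ z) ⊔ y

/-- Upper-modular element of a lattice. -/
def IsUpperModularElt {L : Type*} [Lattice L] (a : L) : Prop :=
  ∀ y z : L, y ≤ a → a ⊓ (y ⊔ z) = y ⊔ (a ⊓ z)

/-- Lower-modular element of a lattice. -/
def IsLowerModularElt {L : Type*} [Lattice L] (a : L) : Prop :=
  ∀ y z : L, a ≤ y → a ⊔ (y ⊓ z) = y ⊓ (a ⊔ z)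

/-- The variety `SL` of semilattice monoids. -/
def SLv : MON := gen {(x*x, x), (x*y, y*x)}

/-- The variety `C₂`. -/
def C2v : MON := gen {(x*x, x*x*x), (x*y, y*x)}

/-- The variety `Cₙ`. -/
def Cv (n : ℕ) : MON := gen {(x^n, x^(n+1)), (x*y, y*x)}

/-- The variety `Aₙ` of Abelian groups of exponent dividing `n`. -/
def Av (n : ℕ) : MON := gen {(x^n, 1), (x*y, y*x)}

/-- The variety `D`. -/
def Dv : MON := gen {(x*x, x*x*x), (x*x*y, x*y*x), (x*y*x, y*x*x)}

/-- The variety `B₂,₃`. -/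
def Bv : MON := gen {(x*x, x*x*x)}

/-- The word `s = yxyzxz`. -/
def s : F := y*x*y*z*x*z

/-- The word `t = yxzxyxz`. -/
def t : F := y*x*z*x*y*x*z

/-- The variety `Q`. -/
def Qv : MON := gen {(s, t)}

/-- The variety `F` (denoted `Fv` to avoid a clash with the free monoid). -/
def Fv : MON :=
  gen {(x*y*x, x*y*x*x), (x*x*y*y, y*y*x*x), (x*x*y, x*x*y*x), (x*y*r*x*y, y*x*r*x*y)}

/-- Square-freeness of a word `w` of length at most `7`, in a form with decidable hypotheses: `w`
is square-free if no two adjacent blocks of equal positive length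
coincide. -/
lemma eq_nil_of_square {w a q b : List ℕ} (hlen : w.length ≤ 7)
    (hw : ∀ i < 8, ∀ j < 8, i + j + j ≤ w.length →
      (w.drop i).take j = (w.drop (i + j)).take j → j = 0)
    (h : w = a ++ (q ++ (q ++ b))) : q = [] := by
  have hl := congrArg List.length h
  simp only [List.length_append] at hl
  have key := hw a.length (by omega) q.length (by omega) (by omega) (by
    rw [← List.drop_drop]
    simp [h])
  exact List.length_eq_zero_iff.mp key

lemma square_s {a q b : List ℕ} (h : [1, 0, 1, 2, 0, 2] = a ++ (q ++ (q ++ b))) : q = [] :=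
  eq_nil_of_square (by decide) (by decide) h

lemma square_t {a q b : List ℕ} (h : [1, 0, 2, 0, 1, 0, 2] = a ++ (q ++ (q ++ b))) : q = [] :=
  eq_nil_of_square (by decide) (by decide) h

/-- If a square-free word contains the image of `s` or of `t` under a substitution that erases one
of the three letters, then the substitution erases all of them. -/
lemma erase_all_of_erase_one {w a b X Y Z : List ℕ}
    (sq : ∀ a q b : List ℕ, w = a ++ (q ++ (q ++ b)) → q = [])
    (h : w = a ++ (Y ++ (X ++ (Y ++ (Z ++ (X ++ (Z ++ b)))))) ∨
      w = a ++ (Y ++ (X ++ (Z ++ (X ++ (Y ++ (X ++ (Z ++ b))))))))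
    (he : X = [] ∨ Y = [] ∨ Z = []) : X = [] ∧ Y = [] ∧ Z = [] := by
  rcases h with h | h <;> rcases he with rfl | rfl | rfl <;> simp only [List.nil_append] at h
  -- `YYZZ`
  · exact ⟨rfl, sq a Y _ h, sq (a ++ Y ++ Y) Z b (by simpa using h)⟩
  -- `XZXZ`
  · have := sq a (X ++ Z) b (by simpa using h)
    simpa using this
  -- `YXYX`
  · have := sq a (Y ++ X) b (by simpa using h)
    simpa [and_comm] using this
  -- `YZYZ`
  · have := sq a (Y ++ Z) b (by simpa using h)
    simpa using this
  -- `XZXXZ`; once `X` is empty, `ZZ` remains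
  · obtain rfl := sq (a ++ X ++ Z) X (Z ++ b) (by simpa using h)
    exact ⟨rfl, rfl, sq a Z b (by simpa using h)⟩
  -- `YXXYX`; once `X` is empty, `YY` remains
  · obtain rfl := sq (a ++ Y) X (Y ++ (X ++ b)) (by simpa using h)
    exact ⟨rfl, sq a Y b (by simpa using h), rfl⟩

lemma exists_singleton {l : List ℕ} (h : l ≠ []) (h' : l.length ≤ 1) : ∃ n, l = [n] :=
  List.length_eq_one_iff.mp (le_antisymm h' (List.length_pos_iff.mpr h))

/-- The substitutions `x ↦ X`, `y ↦ Y`, `z ↦ Z` whose values on `s` or `t` occur in `s` or `t`: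
either all three letters are erased, or the substitution is the identity and the two words
coincide. -/
lemma statement16_list (X Y Z a b : List ℕ) :
    ([1, 0, 1, 2, 0, 2] = a ++ (Y ++ (X ++ (Y ++ (Z ++ (X ++ (Z ++ b)))))) →
      (X = [] ∧ Y = [] ∧ Z = []) ∨ (X = [0] ∧ Y = [1] ∧ Z = [2] ∧ a = [] ∧ b = [])) ∧
    ([1, 0, 1, 2, 0, 2] = a ++ (Y ++ (X ++ (Z ++ (X ++ (Y ++ (X ++ (Z ++ b))))))) →
      (X = [] ∧ Y = [] ∧ Z = [])) ∧
    ([1, 0, 2, 0, 1, 0, 2] = a ++ (Y ++ (X ++ (Y ++ (Z ++ (X ++ (Z ++ b)))))) →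
      (X = [] ∧ Y = [] ∧ Z = [])) ∧
    ([1, 0, 2, 0, 1, 0, 2] = a ++ (Y ++ (X ++ (Z ++ (X ++ (Y ++ (X ++ (Z ++ b))))))) →
      (X = [] ∧ Y = [] ∧ Z = []) ∨ (X = [0] ∧ Y = [1] ∧ Z = [2] ∧ a = [] ∧ b = [])) := by
  by_cases he : X = [] ∨ Y = [] ∨ Z = []
  · exact ⟨fun h => .inl (erase_all_of_erase_one (fun _ _ _ => square_s) (.inl h) he),
      fun h => erase_all_of_erase_one (fun _ _ _ => square_s) (.inr h) he,
      fun h => erase_all_of_erase_one (fun _ _ _ => square_t) (.inl h) he,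
      fun h => .inl (erase_all_of_erase_one (fun _ _ _ => square_t) (.inr h) he)⟩
  · push Not at he
    obtain ⟨hX, hY, hZ⟩ := he
    have lX := List.length_pos_iff.mpr hX
    have lY := List.length_pos_iff.mpr hY
    have lZ := List.length_pos_iff.mpr hZ
    refine ⟨fun h => ?_, fun h => ?_, fun h => ?_, fun h => ?_⟩ <;>
      have hl := congrArg List.length h <;>
      simp only [List.length_append, List.length_cons, List.length_nil] at hl
    · obtain ⟨p, rfl⟩ := exists_singleton hX (by omega)
      obtain ⟨q, rfl⟩ := exists_singleton hY (by omega)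
      obtain ⟨r, rfl⟩ := exists_singleton hZ (by omega)
      simp only [List.length_cons, List.length_nil] at hl
      obtain rfl := List.length_eq_zero_iff.mp (show a.length = 0 by omega)
      obtain rfl := List.length_eq_zero_iff.mp (show b.length = 0 by omega)
      simp at h
      right
      simp; omega
    · omega
    · obtain ⟨p, rfl⟩ := exists_singleton hX (by omega)
      obtain ⟨q, rfl⟩ := exists_singleton hY (by omega)
      obtain ⟨r, rfl⟩ := exists_singleton hZ (by omega)
      simp only [List.length_cons, List.length_nil] at hl
      -- exactly one letter of `t` lies outside the image, on the left or on the right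
      rcases a with _ | ⟨c, _ | ⟨d, a⟩⟩
      · simp at h; omega
      · simp at h; omega
      · simp at hl; omega
    · obtain ⟨p, rfl⟩ := exists_singleton hX (by omega)
      obtain ⟨q, rfl⟩ := exists_singleton hY (by omega)
      obtain ⟨r, rfl⟩ := exists_singleton hZ (by omega)
      simp only [List.length_cons, List.length_nil] at hl
      obtain rfl := List.length_eq_zero_iff.mp (show a.length = 0 by omega)
      obtain rfl := List.length_eq_zero_iff.mp (show b.length = 0 by omega)
      simp at h
      right
      simp; omega

theorem statement16 (ξ : F →* F) (a b u v : F)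
    (huv : (u = s ∧ v = t) ∨ (u = t ∧ v = s)) :
    (s = a * ξ u * b → a * ξ v * b ≠ s → a * ξ v * b = t) ∧
    (t = a * ξ u * b → a * ξ v * b ≠ t → a * ξ v * b = s) := by
  obtain ⟨hss, hst, hts, htt⟩ := statement16_list (ξ x).toList (ξ y).toList (ξ z).toList
    a.toList b.toList
  have hs : s.toList = [1, 0, 1, 2, 0, 2] := rfl
  have ht : t.toList = [1, 0, 2, 0, 1, 0, 2] := rfl
  have es : (a * ξ s * b).toList = a.toList ++ ((ξ y).toList ++ ((ξ x).toList ++ ((ξ y).toList ++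
      ((ξ z).toList ++ ((ξ x).toList ++ ((ξ z).toList ++ b.toList)))))) := by
    simp [s, FreeMonoid.toList_mul]
  have et : (a * ξ t * b).toList = a.toList ++ ((ξ y).toList ++ ((ξ x).toList ++ ((ξ z).toList ++
      ((ξ x).toList ++ ((ξ y).toList ++ ((ξ x).toList ++ ((ξ z).toList ++ b.toList))))))) := by
    simp [t, FreeMonoid.toList_mul]
  rw [← hs, ← es] at hss
  rw [← hs, ← et] at hst
  rw [← ht, ← es] at hts
  rw [← ht, ← et] at htt
  -- an erasing substitution sends `s` and `t` to the same word
  have triv : (ξ x).toList = [] ∧ (ξ y).toList = [] ∧ (ξ z).toList = [] →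
      a * ξ s * b = a * ξ t * b := by
    rintro ⟨h1, h2, h3⟩
    apply FreeMonoid.toList.injective
    rw [es, et, h1, h2, h3]
    rfl
  rcases huv with ⟨rfl, rfl⟩ | ⟨rfl, rfl⟩
  · refine ⟨fun h hne => ?_, fun h hne => ?_⟩
    · rcases hss (congrArg _ h) with h' | ⟨h1, h2, h3, h4, h5⟩
      · exact absurd ((triv h').symm.trans h.symm) hne
      · apply FreeMonoid.toList.injective
        rw [et, h1, h2, h3, h4, h5]
        rfl
    · exact absurd ((triv (hts (congrArg _ h))).symm.trans h.symm) hne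
  · refine ⟨fun h hne => ?_, fun h hne => ?_⟩
    · exact absurd ((triv (hst (congrArg _ h))).trans h.symm) hne
    · rcases htt (congrArg _ h) with h' | ⟨h1, h2, h3, h4, h5⟩
      · exact absurd ((triv h').trans h.symm) hne
      · apply FreeMonoid.toList.injective
        rw [es, h1, h2, h3, h4, h5]
        rfl
end

section
/- The words xyx and s = yxyzxz are isoterms for the variety B = ⟪{(x²,x³)}⟫: if (xyx, w) belongs to the smallest fully invariant congruence on F containing (x², x³), then w = xyx, and if (s, w) belongs to that congruence, then w = s. -/
/-- The word `W` has no nonempty square as a factor. -/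
def SquareFreeWord (W : F) : Prop := ∀ p u q : F, p * u * u * q = W → u = 1

/-- The congruence relating words that cannot be distinguished by substituting, placing the result
in a context, and testing for equality with `W`. -/
def testCon (W : F) : Con F where
  r u v := ∀ (f : F →* F) (p q : F), p * f u * q = W ↔ p * f v * q = W
  iseqv :=
    ⟨fun _ _ _ _ => Iff.rfl, fun h f p q => (h f p q).symm,
      fun h k f p q => (h f p q).trans (k f p q)⟩
  mul' := by
    intro a b a' b' h k f p q
    have h1 := h f p (f a' * q)
    have h2 := k f (p * f b) q
    simp only [map_mul, mul_assoc] at h1 h2 ⊢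
    exact h1.trans h2

lemma isFullyInvariant_testCon (W : F) : IsFullyInvariant (testCon W) :=
  fun g _ _ h f p q => h (f.comp g) p q

lemma testCon_sq_cube {W : F} (hW : SquareFreeWord W) (a : F) :
    testCon W (a * a) (a * a * a) := by
  intro f p q
  simp only [map_mul]
  constructor
  · intro h
    have h1 : f a = 1 := hW p (f a) q (by simpa only [mul_assoc] using h)
    simpa [h1] using h
  · intro h
    have h1 : f a = 1 := hW p (f a) (f a * q) (by simpa only [mul_assoc] using h)
    simpa [h1] using h

lemma SquareFreeWord.isoterm {W : F} (hW : SquareFreeWord W) (w : F)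
    (h : fiGen {(x*x, x*x*x)} W w) : w = W := by
  have h1 : testCon W W w := (fiGen_apply _ _ _).1 h _
    ⟨isFullyInvariant_testCon W, by rintro _ rfl; exact testCon_sq_cube hW x⟩
  simpa using (h1 (MonoidHom.id F) 1 1).1 (by simp)

/-- Square-freeness reduces to a finite check: no two adjacent blocks of the same length `j > 0`
of the word, the first starting at position `i`, coincide. -/
lemma squareFreeWord_of_blocks (L : List ℕ)
    (h : ∀ i < L.length, ∀ j < L.length + 1, 0 < j → i + 2 * j ≤ L.length →
      (L.drop i).take j ≠ (L.drop (i + j)).take j) :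
    SquareFreeWord (FreeMonoid.ofList L) := by
  intro p u q hpq
  have hL : p.toList ++ (u.toList ++ (u.toList ++ q.toList)) = L := by
    have := congrArg FreeMonoid.toList hpq
    simpa [mul_assoc] using this
  by_contra hu
  have hpos : 0 < u.toList.length := List.length_pos_iff.2 fun h0 => hu h0
  have hlen := congrArg List.length hL
  simp only [List.length_append] at hlen
  refine h p.toList.length (by omega) u.toList.length (by omega) hpos (by omega) ?_
  rw [← hL, ← List.drop_drop]
  simp

theorem statement17 :
    (∀ w : F, fiGen {(x*x, x*x*x)} (x*y*x) w → w = x*y*x) ∧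
    (∀ w : F, fiGen {(x*x, x*x*x)} s w → w = s) :=
  ⟨(squareFreeWord_of_blocks [0, 1, 0] (by decide)).isoterm,
    (squareFreeWord_of_blocks [1, 0, 1, 2, 0, 2] (by decide)).isoterm⟩
end
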